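/- Suppose in addition that η ≥ 0 satisfies R^{NS}[(e_u,e_p),(Φ,0)] ≤ η‖Φ‖_V. Then ν‖Φ‖_V ≤ η and ν‖e_u‖_V² + ‖e_p‖_Q² ≤ C₂·η²/ν, where C₂ is the constant in the upper norm-equivalence bound (depending only on ν, Ĉ, β, the continuity constant of b, γ and θ). -/

import Mathlib

open scoped RealInnerProductSpace

/-!
Write `e = u - uh`, `r = p - ph`, and `R` for the momentum residual. Since `b e = 0`, testing `R`
with `e` itself removes the pressure, skew-symmetry removes `c u e e`, and the only convective term
left, `c e uh e`, is absorbed by the viscous term because `Ĉ‖uh‖ ≤ θν` with `θ < 1`. This bounds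
`‖e‖` by `‖Φ‖`. The inf-sup condition then bounds `‖r‖` through
`b v r = R v - ν⟪e, v⟫ - (c u e v + c e uh v)`, whose right-hand side is controlled by `‖Φ‖` and
`‖e‖`. Finally `ν‖Φ‖² = R Φ ≤ η‖Φ‖`.
-/

lemma mul_le_of_mul_sq_le_mul {a m t : ℝ} (hm : 0 ≤ m) (ht : 0 ≤ t) (h : a * t ^ 2 ≤ m * t) :
    a * t ≤ m := by
  rcases ht.eq_or_lt with rfl | ht
  · simpa using hm
  · exact le_of_mul_le_mul_right (by linarith) ht

section Residual

variable {V Q : Type*} [NormedAddCommGroup V] [InnerProductSpace ℝ V]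
  [NormedAddCommGroup Q] [InnerProductSpace ℝ Q]

/-- The inf-sup (Ladyzhenskaya–Babuška–Brezzi) condition with constant `β`. The supremum is never a
junk value: the quotients are bounded by `‖b‖ * ‖q‖`, and for trivial `V` the empty supremum `0` is
the intended one. -/
def InfSupCondition (b : V →L[ℝ] Q →L[ℝ] ℝ) (β : ℝ) : Prop :=
  ∀ q : Q, β * ‖q‖ ≤ ⨆ v : {v : V // v ≠ 0}, b (v : V) q / ‖(v : V)‖

/-- The momentum part `v ↦ R^{NS}[(u - uh, r), (v, 0)]` of the Navier–Stokes residual, where `r` is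
the pressure error. -/
noncomputable def momentumResidual (ν : ℝ) (b : V →L[ℝ] Q →L[ℝ] ℝ) (c : V →L[ℝ] V →L[ℝ] V →L[ℝ] ℝ)
    (u uh : V) (r : Q) (v : V) : ℝ :=
  ν * ⟪u - uh, v⟫ + b v r + (c u u v - c uh uh v)

/-- The constant `C₂` of the upper norm-equivalence bound, where `Ĉ‖u‖ ≤ Λν` and `Ĉ‖uh‖ ≤ θν`. -/
noncomputable def normEquivConstant (ν β Λ θ : ℝ) : ℝ :=
  (1 + ν * ((2 + Λ) / β) ^ 2) / (1 - θ) ^ 2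

lemma normEquivConstant_pos {ν θ : ℝ} (hν : 0 ≤ ν) (hθ : θ < 1) (β Λ : ℝ) :
    0 < normEquivConstant ν β Λ θ := by
  have : 0 < 1 - θ := sub_pos.2 hθ
  unfold normEquivConstant
  positivity

variable {ν Chat β Λ γ θ η : ℝ} {b : V →L[ℝ] Q →L[ℝ] ℝ} {c : V →L[ℝ] V →L[ℝ] V →L[ℝ] ℝ}
  {f : V →L[ℝ] ℝ} {u uh Φ : V} {p ph r : Q}

lemma InfSupCondition.mul_norm_le (hb : InfSupCondition b β) {q : Q} {K : ℝ} (hK : 0 ≤ K)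
    (hbq : ∀ v, b v q ≤ K * ‖v‖) : β * ‖q‖ ≤ K :=
  (hb q).trans <| Real.iSup_le (fun v => (div_le_iff₀ (norm_pos_iff.2 v.2)).2 (hbq v)) hK

lemma mul_norm_le_of_mul_inner_self_le {a m : ℝ} {x : V} (hm : 0 ≤ m)
    (h : a * ⟪x, x⟫ ≤ m * ‖x‖) : a * ‖x‖ ≤ m :=
  mul_le_of_mul_sq_le_mul hm (norm_nonneg x) (by rwa [← real_inner_self_eq_norm_sq])

lemma mul_norm_solution_le (hskew : c u u u = 0) (hdiv : b u p = 0)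
    (hu : ∀ v : V, ν * ⟪u, v⟫ + c u u v + b v p = f v) : ν * ‖u‖ ≤ ‖f‖ := by
  refine mul_norm_le_of_mul_inner_self_le (norm_nonneg f) ?_
  calc ν * ⟪u, u⟫ = f u := by rw [← hu u, hskew, hdiv, add_zero, add_zero]
    _ ≤ ‖f‖ * ‖u‖ := (le_abs_self _).trans (f.le_opNorm u)

-- With `|γ|` in place of `γ` the bound holds for either sign of `Ĉ`.
lemma continuity_mul_norm_solution_le (hν : 0 < ν) (hskew : c u u u = 0) (hdiv : b u p = 0)
    (hu : ∀ v : V, ν * ⟪u, v⟫ + c u u v + b v p = f v) (hγ : Chat * ‖f‖ / ν ^ 2 = γ) :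
    Chat * ‖u‖ ≤ |γ| * ν := by
  have hu_le : ‖u‖ ≤ ‖f‖ / ν := by
    rw [le_div_iff₀' hν]
    exact mul_norm_solution_le hskew hdiv hu
  calc Chat * ‖u‖ ≤ |Chat| * (‖f‖ / ν) := by
        gcongr
        exact le_abs_self Chat
    _ = |γ| * ν := by
        rw [← hγ, abs_div, abs_mul, abs_norm, abs_of_pos (pow_pos hν 2)]
        field_simp

lemma convection_sub_convection (c : V →L[ℝ] V →L[ℝ] V →L[ℝ] ℝ) (u uh v : V) :
    c u u v - c uh uh v = c u (u - uh) v + c (u - uh) uh v := by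
  simp only [map_sub, sub_apply]
  ring

lemma abs_convection_sub_le (hc : ∀ w x v : V, |c w x v| ≤ Chat * ‖w‖ * ‖x‖ * ‖v‖) (v : V) :
    |c u u v - c uh uh v| ≤ (Chat * ‖u‖ + Chat * ‖uh‖) * (‖u - uh‖ * ‖v‖) := by
  rw [convection_sub_convection]
  calc |c u (u - uh) v + c (u - uh) uh v| ≤ |c u (u - uh) v| + |c (u - uh) uh v| := abs_add_le _ _
    _ ≤ Chat * ‖u‖ * ‖u - uh‖ * ‖v‖ + Chat * ‖u - uh‖ * ‖uh‖ * ‖v‖ :=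
        add_le_add (hc _ _ _) (hc _ _ _)
    _ = (Chat * ‖u‖ + Chat * ‖uh‖) * (‖u - uh‖ * ‖v‖) := by ring

lemma mul_norm_velocity_error_le (hν : 0 < ν)
    (hc : ∀ w x v : V, |c w x v| ≤ Chat * ‖w‖ * ‖x‖ * ‖v‖)
    (hskew : c u (u - uh) (u - uh) = 0) (hdiv : b (u - uh) r = 0) (huh : Chat * ‖uh‖ ≤ θ * ν)
    (hΦ : ∀ v, ν * ⟪Φ, v⟫ = momentumResidual ν b c u uh r v) :
    (1 - θ) * ‖u - uh‖ ≤ ‖Φ‖ := by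
  set e := u - uh with he
  have energy : ν * ⟪Φ, e⟫ = ν * ‖e‖ ^ 2 + c e uh e := by
    rw [hΦ, momentumResidual, convection_sub_convection, ← he, hskew, hdiv,
      real_inner_self_eq_norm_sq, add_zero, zero_add]
  have convection_ge : -(θ * ν * ‖e‖ ^ 2) ≤ c e uh e :=
    neg_le_of_abs_le <| calc
      |c e uh e| ≤ Chat * ‖e‖ * ‖uh‖ * ‖e‖ := hc e uh e
      _ = Chat * ‖uh‖ * ‖e‖ ^ 2 := by ring
      _ ≤ θ * ν * ‖e‖ ^ 2 := by gcongr
  refine mul_le_of_mul_sq_le_mul (norm_nonneg Φ) (norm_nonneg e) (le_of_mul_le_mul_left ?_ hν)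
  calc ν * ((1 - θ) * ‖e‖ ^ 2) ≤ ν * ⟪Φ, e⟫ := by linarith
    _ ≤ ν * (‖Φ‖ * ‖e‖) := by gcongr; exact real_inner_le_norm Φ e

lemma mul_norm_pressure_error_le (hν : 0 ≤ ν) (hΛθ : 0 ≤ 1 + Λ + θ) (hb : InfSupCondition b β)
    (hc : ∀ w x v : V, |c w x v| ≤ Chat * ‖w‖ * ‖x‖ * ‖v‖)
    (hu : Chat * ‖u‖ ≤ Λ * ν) (huh : Chat * ‖uh‖ ≤ θ * ν)
    (hΦ : ∀ v, ν * ⟪Φ, v⟫ = momentumResidual ν b c u uh r v) :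
    β * ‖r‖ ≤ ν * (‖Φ‖ + (1 + Λ + θ) * ‖u - uh‖) := by
  refine hb.mul_norm_le (by positivity) fun v => ?_
  have convection_ge : -((Λ * ν + θ * ν) * (‖u - uh‖ * ‖v‖)) ≤ c u u v - c uh uh v :=
    neg_le_of_abs_le <| (abs_convection_sub_le hc v).trans (by gcongr)
  calc b v r = ν * ⟪Φ, v⟫ - ν * ⟪u - uh, v⟫ - (c u u v - c uh uh v) := by
        rw [hΦ, momentumResidual]
        ring
    _ ≤ ν * (‖Φ‖ * ‖v‖) + ν * (‖u - uh‖ * ‖v‖)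
          + (Λ * ν + θ * ν) * (‖u - uh‖ * ‖v‖) := by
        have hΦv := mul_le_mul_of_nonneg_left (real_inner_le_norm Φ v) hν
        have hev := mul_le_mul_of_nonneg_left
          (neg_le_of_abs_le (abs_real_inner_le_norm (u - uh) v)) hν
        linarith
    _ = ν * (‖Φ‖ + (1 + Λ + θ) * ‖u - uh‖) * ‖v‖ := by ring

theorem error_sq_le_normEquivConstant_mul (hν : 0 < ν) (hβ : 0 < β) (hΛθ : 0 ≤ 1 + Λ + θ)
    (hθ : θ < 1) (hb : InfSupCondition b β)
    (hc : ∀ w x v : V, |c w x v| ≤ Chat * ‖w‖ * ‖x‖ * ‖v‖)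
    (hskew : c u (u - uh) (u - uh) = 0) (hdiv : b (u - uh) r = 0)
    (hu : Chat * ‖u‖ ≤ Λ * ν) (huh : Chat * ‖uh‖ ≤ θ * ν)
    (hΦ : ∀ v, ν * ⟪Φ, v⟫ = momentumResidual ν b c u uh r v) :
    ν * ‖u - uh‖ ^ 2 + ‖r‖ ^ 2 ≤ normEquivConstant ν β Λ θ * (ν * ‖Φ‖ ^ 2) := by
  have hθ' : 0 < 1 - θ := sub_pos.2 hθ
  have velocity : ‖u - uh‖ ≤ ‖Φ‖ / (1 - θ) := by
    rw [le_div_iff₀' hθ']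
    exact mul_norm_velocity_error_le hν hc hskew hdiv huh hΦ
  have pressure : ‖r‖ ≤ ν * ((2 + Λ) / β) * ‖Φ‖ / (1 - θ) := by
    refine le_of_mul_le_mul_left ?_ hβ
    calc β * ‖r‖ ≤ ν * (‖Φ‖ + (1 + Λ + θ) * ‖u - uh‖) :=
          mul_norm_pressure_error_le hν.le hΛθ hb hc hu huh hΦ
      _ ≤ ν * (‖Φ‖ + (1 + Λ + θ) * (‖Φ‖ / (1 - θ))) := by gcongr
      _ = β * (ν * ((2 + Λ) / β) * ‖Φ‖ / (1 - θ)) := by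
          field_simp
          ring
  calc ν * ‖u - uh‖ ^ 2 + ‖r‖ ^ 2
      ≤ ν * (‖Φ‖ / (1 - θ)) ^ 2 + (ν * ((2 + Λ) / β) * ‖Φ‖ / (1 - θ)) ^ 2 := by gcongr
    _ = normEquivConstant ν β Λ θ * (ν * ‖Φ‖ ^ 2) := by
        simp only [normEquivConstant, div_pow]
        ring

theorem reliability_abstract_skeleton_general
    (hν : 0 < ν) (hβ : 0 < β) (hθ0 : 0 ≤ θ) (hθ1 : θ < 1) (hb : InfSupCondition b β)
    (hc : ∀ w x v : V, |c w x v| ≤ Chat * ‖w‖ * ‖x‖ * ‖v‖)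
    (hskew : ∀ w : V, (∀ q : Q, b w q = 0) → ∀ v : V, c w v v = 0)
    (hγ : Chat * ‖f‖ / ν ^ 2 = γ)
    (hu : ∀ v : V, ν * ⟪u, v⟫ + c u u v + b v p = f v)
    (hbu : ∀ q : Q, b u q = 0) (hbuh : ∀ q : Q, b uh q = 0) (huh : Chat * ‖uh‖ ≤ θ * ν)
    (hΦ : ∀ v, ν * ⟪Φ, v⟫ = momentumResidual ν b c u uh (p - ph) v) (hη : 0 ≤ η)
    (hR : momentumResidual ν b c u uh (p - ph) Φ ≤ η * ‖Φ‖) :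
    ν * ‖Φ‖ ≤ η ∧
      ν * ‖u - uh‖ ^ 2 + ‖p - ph‖ ^ 2 ≤ normEquivConstant ν β |γ| θ * η ^ 2 / ν := by
  have representer : ν * ‖Φ‖ ≤ η :=
    mul_norm_le_of_mul_inner_self_le hη ((hΦ Φ).trans_le hR)
  have hdiv : b (u - uh) (p - ph) = 0 := by
    rw [map_sub b, sub_apply, hbu, hbuh, sub_zero]
  have hu_le : Chat * ‖u‖ ≤ |γ| * ν :=
    continuity_mul_norm_solution_le hν (hskew u hbu u) (hbu p) hu hγ
  have hC₂ := normEquivConstant_pos hν.le hθ1 β |γ|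
  refine ⟨representer, ?_⟩
  calc ν * ‖u - uh‖ ^ 2 + ‖p - ph‖ ^ 2
      ≤ normEquivConstant ν β |γ| θ * (ν * ‖Φ‖ ^ 2) :=
        error_sq_le_normEquivConstant_mul hν hβ (by positivity) hθ1 hb hc
          (hskew u hbu (u - uh)) hdiv hu_le huh hΦ
    _ = normEquivConstant ν β |γ| θ * (ν * ‖Φ‖) ^ 2 / ν := by field_simp
    _ ≤ normEquivConstant ν β |γ| θ * η ^ 2 / ν := by gcongr

end Residual

/-- Suppose in addition that `η ≥ 0` satisfies
`R^{NS}[(e_u,e_p),(Φ,0)] ≤ η‖Φ‖_V`.  Then `ν‖Φ‖_V ≤ η` and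
`ν‖e_u‖² + ‖e_p‖² ≤ C₂·η²/ν`, where `C₂` is the constant in the upper
norm-equivalence bound (depending only on `ν`, `Ĉ`, `β`, the continuity
constant of `b`, `γ` and `θ`). -/
theorem reliability_abstract_skeleton
    {V Q : Type*}
    [NormedAddCommGroup V] [InnerProductSpace ℝ V] [CompleteSpace V]
    [NormedAddCommGroup Q] [InnerProductSpace ℝ Q] [CompleteSpace Q]
    (ν Chat β Cb γ θ : ℝ)
    (hν : 0 < ν) (hβ : 0 < β) (hγ : γ < 1) (hθ0 : 0 ≤ θ) (hθ1 : θ < 1) :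
    ∃ C₂ > (0 : ℝ),
      ∀ (b : V →L[ℝ] Q →L[ℝ] ℝ)
        (c : V →L[ℝ] V →L[ℝ] V →L[ℝ] ℝ)
        (f : V →L[ℝ] ℝ)
        (u uh Φ : V) (p ph ψ : Q) (η : ℝ),
        ‖b‖ ≤ Cb →
        (∀ q : Q, β * ‖q‖ ≤ ⨆ v : {v : V // v ≠ 0}, b (v : V) q / ‖(v : V)‖) →
        (∀ w x v : V, |c w x v| ≤ Chat * ‖w‖ * ‖x‖ * ‖v‖) →
        (∀ w : V, (∀ q : Q, b w q = 0) → ∀ v : V, c w v v = 0) →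
        Chat * ‖f‖ / ν ^ 2 = γ →
        (∀ v : V, ν * ⟪u, v⟫ + c u u v + b v p = f v) →
        (∀ q : Q, b u q = 0) →
        (∀ q : Q, b uh q = 0) →
        Chat * ‖uh‖ ≤ θ * ν →
        (∀ v : V, ∀ q : Q,
          ν * ⟪Φ, v⟫ + ⟪ψ, q⟫ =
            ν * ⟪u - uh, v⟫ + b v (p - ph) + b (u - uh) q +
              (c u u v - c uh uh v)) →
        0 ≤ η →
        (ν * ⟪u - uh, Φ⟫ + b Φ (p - ph) + b (u - uh) (0 : Q) +
            (c u u Φ - c uh uh Φ) ≤ η * ‖Φ‖) →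
        ν * ‖Φ‖ ≤ η ∧
        ν * ‖u - uh‖ ^ 2 + ‖p - ph‖ ^ 2 ≤ C₂ * η ^ 2 / ν := by
  refine ⟨normEquivConstant ν β |γ| θ, normEquivConstant_pos hν.le hθ1 β |γ|, ?_⟩
  intro b c f u uh Φ p ph ψ η _ hb hc hskew hγ_eq hu hbu hbuh huh hΦ hη hR
  have hΦ₀ : ∀ v, ν * ⟪Φ, v⟫ = momentumResidual ν b c u uh (p - ph) v := fun v => by
    simpa only [momentumResidual, inner_zero_right, map_zero, add_zero] using hΦ v 0
  exact reliability_abstract_skeleton_general hν hβ hθ0 hθ1 hb hc hskew hγ_eq hu hbu hbuh huh hΦ₀ hη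
    (by simpa only [momentumResidual, map_zero, add_zero] using hR)
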